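/- Integration of a controlled integrand against a controlled path: Let X = (x, 𝕏) be a p-rough path with control ω on [0,T], V and Ṽ Banach spaces, (y, y†) a V-valued rough path controlled by X, and (α, α†) an L(V,Ṽ)-valued rough path controlled by X, where α_s† ∈ L(W, L(V,Ṽ)) is identified with an element of L(W ⊗ V, Ṽ). Then there exists a continuous z : [0,T] → Ṽ with z_0 = 0 and a constant C > 0 such that |z_t − z_s − α_s(y_t − y_s) − α_s†((I_W ⊗ y_s†) 𝕏_{s,t})| ≤ C ω(s,t)^{3/p} for all 0 ≤ s ≤ t ≤ T. Moreover, setting z_s† := α_s ∘ y_s†, the pair (z, z†) is a Ṽ-valued rough path controlled by X. -/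

import Mathlib

noncomputable section

open scoped BigOperators

/-- `ℝ^n` with the Euclidean norm. -/
abbrev Euc (n : ℕ) : Type := EuclideanSpace ℝ (Fin n)

/-- The `i`-th standard basis vector of `ℝ^n`. -/
def eb {n : ℕ} (i : Fin n) : Euc n := EuclideanSpace.single i 1

/-- Tensor product of two Euclidean vectors, realized in `ℝ^{n×m}` with the Euclidean norm. -/
def tensorE {n m : ℕ} (v : Euc n) (w : Euc m) : EuclideanSpace ℝ (Fin n × Fin m) :=
  (EuclideanSpace.equiv (Fin n × Fin m) ℝ).symm fun p => v p.1 * w p.2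

/-- Application of the (unique) linear extension of a bilinear map `B` to a tensor
`X ∈ ℝ^n ⊗ ℝ^m ≅ ℝ^{n × m}`. -/
def tapply {n m : ℕ} {V : Type*} [NormedAddCommGroup V] [NormedSpace ℝ V]
    (B : Euc n → Euc m → V) (X : EuclideanSpace ℝ (Fin n × Fin m)) : V :=
  ∑ q : Fin n × Fin m, X q • B (eb q.1) (eb q.2)
/-- `ω` is a control on the simplex `{(s,t) : 0 ≤ s ≤ t ≤ T}`. -/
structure IsControl (T : ℝ) (ω : ℝ → ℝ → ℝ) : Prop where
  cont : ContinuousOn (fun q : ℝ × ℝ => ω q.1 q.2)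
    {q : ℝ × ℝ | 0 ≤ q.1 ∧ q.1 ≤ q.2 ∧ q.2 ≤ T}
  nonneg : ∀ ⦃s t : ℝ⦄, 0 ≤ s → s ≤ t → t ≤ T → 0 ≤ ω s t
  zero : ∀ ⦃s : ℝ⦄, 0 ≤ s → s ≤ T → ω s s = 0
  superadditive : ∀ ⦃s t u : ℝ⦄, 0 ≤ s → s ≤ t → t ≤ u → u ≤ T → ω s t + ω t u ≤ ω s u
/-- `(x, XX)` is a `p`-rough path with control `ω` on `[0,T]`. -/
structure IsRoughPath (T p : ℝ) {k : ℕ} (ω : ℝ → ℝ → ℝ)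
    (x : ℝ → Euc k) (XX : ℝ → ℝ → EuclideanSpace ℝ (Fin k × Fin k)) : Prop where
  cont_x : ContinuousOn x (Set.Icc 0 T)
  cont_XX : ContinuousOn (fun q : ℝ × ℝ => XX q.1 q.2)
    {q : ℝ × ℝ | 0 ≤ q.1 ∧ q.1 ≤ q.2 ∧ q.2 ≤ T}
  chen : ∀ ⦃s t u : ℝ⦄, 0 ≤ s → s ≤ t → t ≤ u → u ≤ T →
    XX s u = XX s t + XX t u + tensorE (x t - x s) (x u - x t)
  bound_x : ∀ ⦃s t : ℝ⦄, 0 ≤ s → s ≤ t → t ≤ T → ‖x t - x s‖ ≤ ω s t ^ (1 / p)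
  bound_XX : ∀ ⦃s t : ℝ⦄, 0 ≤ s → s ≤ t → t ≤ T → ‖XX s t‖ ≤ ω s t ^ (2 / p)
/-- `(y, y')` is a `V`-valued rough path controlled by `X = (x, ·)` (with control `ω`)
on the interval `[a, b]`. -/
def IsCRP (p : ℝ) {k : ℕ} (ω : ℝ → ℝ → ℝ) (x : ℝ → Euc k)
    {V : Type*} [NormedAddCommGroup V] [NormedSpace ℝ V]
    (a b : ℝ) (y : ℝ → V) (y' : ℝ → Euc k →L[ℝ] V) : Prop :=
  ContinuousOn y (Set.Icc a b) ∧ ContinuousOn y' (Set.Icc a b) ∧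
    ∃ C : ℝ, ∀ ⦃s t : ℝ⦄, a ≤ s → s ≤ t → t ≤ b →
      ‖y t - y s - y' s (x t - x s)‖ ≤ C * ω s t ^ (2 / p) ∧
      ‖y' t - y' s‖ ≤ C * ω s t ^ (1 / p)

section Sewing

variable {E : Type*} [NormedAddCommGroup E]

lemma ctrl_mono {T : ℝ} {ω : ℝ → ℝ → ℝ} (hω : IsControl T ω) {s s' t' t : ℝ}
    (h0 : 0 ≤ s) (h1 : s ≤ s') (h2 : s' ≤ t') (h3 : t' ≤ t) (h4 : t ≤ T) :
    ω s' t' ≤ ω s t := by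
  have a1 := hω.superadditive h0 h1 (h2.trans h3) h4
  have a2 := hω.superadditive (h0.trans h1) h2 h3 h4
  have a3 := hω.nonneg h0 h1 (h2.trans (h3.trans h4))
  have a4 := hω.nonneg ((h0.trans h1).trans h2) h3 h4
  linarith

lemma ctrl_small {T : ℝ} {ω : ℝ → ℝ → ℝ} (hω : IsControl T ω) {ε : ℝ} (hε : 0 < ε) :
    ∃ δ > 0, ∀ s t, 0 ≤ s → s ≤ t → t ≤ T → t - s < δ → ω s t ≤ ε := by
  have hc : IsCompact {q : ℝ × ℝ | 0 ≤ q.1 ∧ q.1 ≤ q.2 ∧ q.2 ≤ T} := by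
    refine IsCompact.of_isClosed_subset
      ((isCompact_Icc (a := (0:ℝ)) (b := T)).prod (isCompact_Icc (a := (0:ℝ)) (b := T))) ?_ ?_
    · exact (isClosed_le continuous_const continuous_fst).inter
        ((isClosed_le continuous_fst continuous_snd).inter
          (isClosed_le continuous_snd continuous_const))
    · rintro ⟨a, b⟩ ⟨h1, h2, h3⟩
      exact ⟨⟨h1, h2.trans h3⟩, ⟨h1.trans h2, h3⟩⟩
  have hu := hc.uniformContinuousOn_of_continuous hω.cont
  rw [Metric.uniformContinuousOn_iff] at hu
  obtain ⟨δ, hδ, h⟩ := hu ε hε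
  refine ⟨δ, hδ, fun s t h0 h1 h2 h3 => ?_⟩
  have := h (s, t) ⟨h0, h1, h2⟩ (s, s) ⟨h0, le_rfl, h1.trans h2⟩ (by
    rw [Prod.dist_eq]
    simp only [dist_self, Real.dist_eq]
    rw [abs_of_nonneg (by linarith)]
    exact max_lt hδ h3)
  simp only [hω.zero h0 (h1.trans h2), Real.dist_eq, sub_zero] at this
  exact (le_abs_self _).trans this.le

lemma ctrl_sum {T : ℝ} {ω : ℝ → ℝ → ℝ} (hω : IsControl T ω) {u : ℕ → ℝ} (hu : Monotone u)
    (h0 : ∀ i, 0 ≤ u i) (hT : ∀ i, u i ≤ T) (N : ℕ) :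
    ∑ i ∈ Finset.range N, ω (u i) (u (i+1)) ≤ ω (u 0) (u N) := by
  induction N with
  | zero => simp [hω.zero (h0 0) (hT 0)]
  | succ n ih =>
    rw [Finset.sum_range_succ]
    have := hω.superadditive (h0 0) (hu (Nat.zero_le n)) (hu (Nat.le_succ n)) (hT (n+1))
    linarith

lemma ctrl_sum_pow {T : ℝ} {ω : ℝ → ℝ → ℝ} (hω : IsControl T ω) {u : ℕ → ℝ} (hu : Monotone u)
    (h0 : ∀ i, 0 ≤ u i) (hT : ∀ i, u i ≤ T) {θ ε : ℝ} (hθ : 1 < θ)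
    (hs : ∀ i, ω (u i) (u (i+1)) ≤ ε) (N : ℕ) :
    ∑ i ∈ Finset.range N, ω (u i) (u (i+1)) ^ θ ≤ ε ^ (θ - 1) * ω 0 T := by
  have hn : ∀ i, 0 ≤ ω (u i) (u (i+1)) := fun i => hω.nonneg (h0 i) (hu (Nat.le_succ i)) (hT _)
  have hε : 0 ≤ ε := (hn 0).trans (hs 0)
  calc ∑ i ∈ Finset.range N, ω (u i) (u (i+1)) ^ θ
      ≤ ∑ i ∈ Finset.range N, ε ^ (θ - 1) * ω (u i) (u (i+1)) := by
        refine Finset.sum_le_sum fun i _ => ?_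
        have : ω (u i) (u (i+1)) ^ θ = ω (u i) (u (i+1)) ^ (θ - 1) * ω (u i) (u (i+1)) := by
          conv_lhs => rw [show θ = (θ - 1) + 1 by ring]
          rw [Real.rpow_add_one' (hn i) (by linarith)]
        rw [this]
        exact mul_le_mul_of_nonneg_right
          (Real.rpow_le_rpow (hn i) (hs i) (by linarith)) (hn i)
    _ = ε ^ (θ - 1) * ∑ i ∈ Finset.range N, ω (u i) (u (i+1)) := by rw [Finset.mul_sum]
    _ ≤ _ := by
        refine mul_le_mul_of_nonneg_left ?_ (Real.rpow_nonneg hε _)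
        exact (ctrl_sum hω hu h0 hT N).trans
          (ctrl_mono hω le_rfl (h0 0) (hu (Nat.zero_le _)) (hT _) le_rfl)

lemma sew_diag {T : ℝ} {ω : ℝ → ℝ → ℝ} (hω : IsControl T ω) {θ K : ℝ} (hθ : 1 < θ)
    {Ξ : ℝ → ℝ → E}
    (hΞ : ∀ s t u, 0 ≤ s → s ≤ t → t ≤ u → u ≤ T → ‖Ξ s u - Ξ s t - Ξ t u‖ ≤ K * ω s u ^ θ)
    {s : ℝ} (h0 : 0 ≤ s) (h1 : s ≤ T) : Ξ s s = 0 := by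
  have := hΞ s s s h0 le_rfl le_rfl h1
  rw [hω.zero h0 h1, Real.zero_rpow (by linarith), mul_zero] at this
  simpa using this

lemma sew_max {T : ℝ} {ω : ℝ → ℝ → ℝ} (hω : IsControl T ω) {θ K : ℝ} (hθ : 1 < θ) (hK : 0 < K) :
    ∃ C > 0, ∀ (Ξ : ℝ → ℝ → E),
    (∀ s t u, 0 ≤ s → s ≤ t → t ≤ u → u ≤ T → ‖Ξ s u - Ξ s t - Ξ t u‖ ≤ K * ω s u ^ θ) →
    ∀ (u : ℕ → ℝ), Monotone u → (∀ i, 0 ≤ u i) → (∀ i, u i ≤ T) → ∀ a b, a ≤ b →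
    ‖∑ i ∈ Finset.Ico a b, Ξ (u i) (u (i+1)) - Ξ (u a) (u b)‖ ≤ C * ω (u a) (u b) ^ θ := by
  set r : ℝ := 2 * (1/2 : ℝ) ^ θ with hr
  have hr1 : r < 1 := by
    have : (1/2 : ℝ) ^ θ < (1/2 : ℝ) ^ (1:ℝ) :=
      Real.rpow_lt_rpow_of_exponent_gt (by norm_num) (by norm_num) hθ
    rw [Real.rpow_one] at this
    linarith
  have hC : 0 < 2 * K / (1 - r) := div_pos (by linarith) (by linarith)
  refine ⟨2 * K / (1 - r), hC, ?_⟩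
  set C := 2 * K / (1 - r) with hCdef
  have hCe : C * r + 2 * K = C := by
    have : (1 - r) ≠ 0 := by linarith
    rw [hCdef]; field_simp; ring
  intro Ξ hΞ u hu h0 hT
  suffices H : ∀ n a b, a ≤ b → b - a ≤ n →
      ‖∑ i ∈ Finset.Ico a b, Ξ (u i) (u (i+1)) - Ξ (u a) (u b)‖ ≤ C * ω (u a) (u b) ^ θ from
    fun a b hab => H (b - a) a b hab le_rfl
  intro n
  induction n with
  | zero =>
    intro a b hab hn
    obtain rfl : a = b := by omega
    simp [sew_diag hω hθ hΞ (h0 a) (hT a), hω.zero (h0 a) (hT a),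
      Real.zero_rpow (show θ ≠ 0 by linarith)]
  | succ n ih =>
    intro a b hab hn
    rcases hab.eq_or_lt with rfl | hlt
    · exact ih a a le_rfl (by omega)
    have hW : 0 ≤ ω (u a) (u b) := hω.nonneg (h0 a) (hu hab) (hT b)
    set W := ω (u a) (u b) with hWdef
    obtain ⟨j, haj, hjb, hj1, hj2⟩ : ∃ j, a ≤ j ∧ j < b ∧ ω (u a) (u j) ≤ W / 2 ∧
        ω (u (j+1)) (u b) ≤ W / 2 := by
      classical
      set P : ℕ → Prop := fun j => a ≤ j ∧ j < b ∧ ω (u a) (u j) ≤ W / 2 with hP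
      have hPa : P a := ⟨le_rfl, hlt, by rw [hω.zero (h0 a) (hT a)]; linarith⟩
      have hg := Nat.findGreatest_spec (P := P) (n := b) hlt.le hPa
      have hmax : ∀ k, Nat.findGreatest P b < k → k ≤ b → ¬ P k :=
        fun k h1 h2 => Nat.findGreatest_is_greatest h1 h2
      set j := Nat.findGreatest P b
      obtain ⟨g1, g2, g3⟩ := hg
      refine ⟨j, g1, g2, g3, ?_⟩
      rcases (Nat.succ_le_of_lt g2).eq_or_lt with he | hl
      · have : j + 1 = b := he
        rw [this, hω.zero (h0 b) (hT b)]; linarith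
      · have h3 := hmax (j+1) (Nat.lt_succ_self j) hl.le
        have h4 : W / 2 < ω (u a) (u (j+1)) := by
          by_contra hcon
          exact h3 ⟨by omega, hl, not_lt.mp hcon⟩
        have h5 := hω.superadditive (h0 a) (hu (show a ≤ j+1 by omega)) (hu hl.le) (hT b)
        linarith
    have e1 := ih a j haj (by omega)
    have e2 := ih (j+1) b hjb (by omega)
    have half : (W/2) ^ θ = W ^ θ * (1/2 : ℝ) ^ θ := by
      rw [← Real.mul_rpow hW (by norm_num)]; congr 1; ring
    have b1 : ω (u a) (u j) ^ θ ≤ W ^ θ * (1/2 : ℝ) ^ θ := by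
      rw [← half]
      exact Real.rpow_le_rpow (hω.nonneg (h0 a) (hu haj) (hT j)) hj1 (by linarith)
    have b2 : ω (u (j+1)) (u b) ^ θ ≤ W ^ θ * (1/2 : ℝ) ^ θ := by
      rw [← half]
      exact Real.rpow_le_rpow (hω.nonneg (h0 _) (hu hjb) (hT b)) hj2 (by linarith)
    have d1 := hΞ (u a) (u j) (u b) (h0 a) (hu haj) (hu hjb.le) (hT b)
    have d2 := hΞ (u j) (u (j+1)) (u b) (h0 j) (hu (Nat.le_succ j)) (hu hjb) (hT b)
    have b3 : ω (u j) (u b) ^ θ ≤ W ^ θ :=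
      Real.rpow_le_rpow (hω.nonneg (h0 _) (hu hjb.le) (hT b))
        (ctrl_mono hω (h0 a) (hu haj) (hu hjb.le) le_rfl (hT b)) (by linarith)
    have split : ∑ i ∈ Finset.Ico a b, Ξ (u i) (u (i+1)) =
        ∑ i ∈ Finset.Ico a j, Ξ (u i) (u (i+1)) + Ξ (u j) (u (j+1)) +
        ∑ i ∈ Finset.Ico (j+1) b, Ξ (u i) (u (i+1)) := by
      rw [← Finset.sum_Ico_succ_top haj, Finset.sum_Ico_consecutive _ (by omega) hjb]
    have key : ∑ i ∈ Finset.Ico a b, Ξ (u i) (u (i+1)) - Ξ (u a) (u b) =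
        (∑ i ∈ Finset.Ico a j, Ξ (u i) (u (i+1)) - Ξ (u a) (u j)) +
        (∑ i ∈ Finset.Ico (j+1) b, Ξ (u i) (u (i+1)) - Ξ (u (j+1)) (u b)) -
        (Ξ (u a) (u b) - Ξ (u a) (u j) - Ξ (u j) (u b)) -
        (Ξ (u j) (u b) - Ξ (u j) (u (j+1)) - Ξ (u (j+1)) (u b)) := by
      rw [split]; abel
    rw [key]
    refine (norm_sub_le _ _).trans ((add_le_add_left ((norm_sub_le _ _).trans
      (add_le_add_left (norm_add_le _ _) _)) _).trans ?_)
    have c1 := mul_le_mul_of_nonneg_left b1 hC.le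
    have c2 := mul_le_mul_of_nonneg_left b2 hC.le
    have c3 := mul_le_mul_of_nonneg_left b3 hK.le
    have : C * W ^ θ = C * (W ^ θ * (1/2 : ℝ) ^ θ) + C * (W ^ θ * (1/2 : ℝ) ^ θ) + K * W ^ θ
        + K * W ^ θ := by
      conv_lhs => rw [← hCe]
      rw [hr]; ring
    linarith

lemma sew_block {T : ℝ} {ω : ℝ → ℝ → ℝ} {θ C : ℝ} {Ξ : ℝ → ℝ → E} {u : ℕ → ℝ}
    (H : ∀ a b, a ≤ b →
      ‖∑ i ∈ Finset.Ico a b, Ξ (u i) (u (i+1)) - Ξ (u a) (u b)‖ ≤ C * ω (u a) (u b) ^ θ)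
    (M N : ℕ) :
    ‖∑ i ∈ Finset.range (N * M), Ξ (u i) (u (i+1)) -
      ∑ i ∈ Finset.range N, Ξ (u (i * M)) (u ((i+1) * M))‖ ≤
      C * ∑ i ∈ Finset.range N, ω (u (i * M)) (u ((i+1) * M)) ^ θ := by
  induction N with
  | zero => simp
  | succ n ih =>
    have hle : n * M ≤ (n+1) * M := Nat.mul_le_mul_right _ (Nat.le_succ n)
    have h := H (n * M) ((n+1) * M) hle
    rw [Finset.sum_range_succ, Finset.sum_range_succ, mul_add,
      ← Finset.sum_range_add_sum_Ico _ hle]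
    calc _ = ‖(∑ i ∈ Finset.range (n * M), Ξ (u i) (u (i+1)) -
      ∑ i ∈ Finset.range n, Ξ (u (i * M)) (u ((i+1) * M))) +
      (∑ i ∈ Finset.Ico (n * M) ((n+1) * M), Ξ (u i) (u (i+1)) -
        Ξ (u (n * M)) (u ((n+1) * M)))‖ := by congr 1; abel
      _ ≤ _ := (norm_add_le _ _).trans (add_le_add ih h)

/-- clipped dyadic points -/
def dyp (T : ℝ) (n : ℕ) (t : ℝ) (i : ℕ) : ℝ := min (i * (T / 2 ^ n)) t

lemma dyp_mono {T : ℝ} (hT : 0 < T) (n : ℕ) (t : ℝ) : Monotone (dyp T n t) := by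
  intro i j hij
  have : (i:ℝ) ≤ j := by exact_mod_cast hij
  exact min_le_min_right _ (mul_le_mul_of_nonneg_right this (by positivity))

lemma dyp_nonneg {T : ℝ} (hT : 0 < T) (n : ℕ) {t : ℝ} (ht : 0 ≤ t) (i : ℕ) :
    0 ≤ dyp T n t i := le_min (by positivity) ht

lemma dyp_le {T : ℝ} (n : ℕ) {t : ℝ} (i : ℕ) : dyp T n t i ≤ t := min_le_right _ _

lemma dyp_refine {T : ℝ} (n m : ℕ) {t : ℝ} (i : ℕ) :
    dyp T (n + m) t (i * 2 ^ m) = dyp T n t i := by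
  unfold dyp
  congr 1
  push_cast
  rw [pow_add]
  field_simp

lemma dyp_step {T : ℝ} (hT : 0 < T) (n : ℕ) (t : ℝ) (i : ℕ) :
    dyp T n t (i+1) - dyp T n t i ≤ T / 2 ^ n := by
  unfold dyp
  have : 0 < T / 2 ^ n := by positivity
  push_cast
  rcases le_total ((i:ℝ) * (T / 2 ^ n)) t with h | h
  · rw [min_eq_left h]
    linarith [min_le_left (((i:ℝ)+1) * (T / 2 ^ n)) t]
  · rw [min_eq_right h]
    linarith [min_le_right (((i:ℝ)+1) * (T / 2 ^ n)) t]

lemma dyp_small {T : ℝ} (hT : 0 < T) {ω : ℝ → ℝ → ℝ} (hω : IsControl T ω) {θ η : ℝ} (hθ : 1 < θ)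
    (hη : 0 < η) : ∃ N, ∀ n ≥ N, ∀ t, 0 ≤ t → t ≤ T → ∀ L,
      ∑ i ∈ Finset.range L, ω (dyp T n t i) (dyp T n t (i+1)) ^ θ ≤ η := by
  have hW : 0 ≤ ω 0 T := hω.nonneg le_rfl hT.le le_rfl
  obtain ⟨ε, hε, hεη⟩ : ∃ ε > 0, ε ^ (θ - 1) * ω 0 T ≤ η := by
    refine ⟨(η / (ω 0 T + 1)) ^ (1 / (θ - 1)), by positivity, ?_⟩
    rw [← Real.rpow_mul (by positivity), one_div_mul_cancel (by linarith), Real.rpow_one,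
      div_mul_eq_mul_div, div_le_iff₀ (by linarith)]
    nlinarith
  obtain ⟨δ, hδ, h⟩ := ctrl_small hω hε
  obtain ⟨N, hN⟩ : ∃ N : ℕ, T / 2 ^ N < δ := by
    obtain ⟨N, hN⟩ := pow_unbounded_of_one_lt (T / δ) (one_lt_two)
    refine ⟨N, ?_⟩
    rw [div_lt_iff₀ hδ] at hN
    rw [div_lt_iff₀ (by positivity)]
    linarith
  refine ⟨N, fun n hn t h0 h1 L => ?_⟩
  refine (ctrl_sum_pow hω (dyp_mono hT n t) (dyp_nonneg hT n h0)
    (fun i => (dyp_le n i).trans h1) hθ (fun i => ?_) L).trans hεη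
  refine h _ _ (dyp_nonneg hT n h0 i) (dyp_mono hT n t (Nat.le_succ i)) ((dyp_le n _).trans h1) ?_
  refine (dyp_step hT n t i).trans_lt (lt_of_le_of_lt ?_ hN)
  exact div_le_div_of_nonneg_left hT.le (by positivity) (pow_le_pow_right₀ (by norm_num) hn)

lemma clip_est {T : ℝ} {ω : ℝ → ℝ → ℝ} (hω : IsControl T ω) {θ K : ℝ} (hθ : 1 < θ) (hK : 0 < K)
    {Ξ : ℝ → ℝ → E}
    (hΞ : ∀ s t u, 0 ≤ s → s ≤ t → t ≤ u → u ≤ T → ‖Ξ s u - Ξ s t - Ξ t u‖ ≤ K * ω s u ^ θ)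
    {a b s t : ℝ} (h0 : 0 ≤ a) (hab : a ≤ b) (hs : 0 ≤ s) (hst : s ≤ t) (ht : t ≤ T) :
    ‖Ξ (min a t) (min b t) - Ξ (min a s) (min b s) - Ξ (max s (min a t)) (max s (min b t))‖
      ≤ K * ω (min a t) (min b t) ^ θ := by
  have hnn : 0 ≤ K * ω (min a t) (min b t) ^ θ :=
    mul_nonneg hK.le (Real.rpow_nonneg (hω.nonneg (le_min h0 (hs.trans hst))
      (min_le_min_right _ hab) ((min_le_right _ _).trans ht)) _)
  have hd := sew_diag hω hθ hΞ hs (hst.trans ht)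
  rcases le_total b s with hb | hb
  · have e1 : min a t = a := min_eq_left (hab.trans (hb.trans hst))
    have e2 : min b t = b := min_eq_left (hb.trans hst)
    rw [e1, e2] at hnn ⊢
    rw [min_eq_left (hab.trans hb), min_eq_left hb, max_eq_left (hab.trans hb), max_eq_left hb, hd]
    simpa using hnn
  rcases le_total s a with ha | ha
  · rw [min_eq_right ha, min_eq_right hb, max_eq_right (le_min ha hst),
      max_eq_right (le_min hb hst), hd]
    simpa using hnn
  · have e1 : min a t = a := min_eq_left (ha.trans hst)
    rw [e1, min_eq_left ha, min_eq_right hb, max_eq_left ha, max_eq_right (le_min hb hst)]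
    exact hΞ _ _ _ h0 ha (le_min hb hst) ((min_le_right _ _).trans ht)

theorem sewing [CompleteSpace E] {T : ℝ} (hT : 0 < T) {ω : ℝ → ℝ → ℝ} (hω : IsControl T ω)
    {θ K : ℝ} (hθ : 1 < θ) (hK : 0 < K) {Ξ : ℝ → ℝ → E}
    (hΞ : ∀ s t u, 0 ≤ s → s ≤ t → t ≤ u → u ≤ T → ‖Ξ s u - Ξ s t - Ξ t u‖ ≤ K * ω s u ^ θ) :
    ∃ z : ℝ → E, z 0 = 0 ∧ ∃ C > 0, ∀ s t, 0 ≤ s → s ≤ t → t ≤ T →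
      ‖z t - z s - Ξ s t‖ ≤ C * ω s t ^ θ := by
  obtain ⟨C, hC, hmax⟩ := sew_max (E := E) hω hθ hK
  replace hmax := hmax Ξ hΞ
  set Z : ℕ → ℝ → E := fun n t =>
    ∑ i ∈ Finset.range (2 ^ n), Ξ (dyp T n t i) (dyp T n t (i+1)) with hZ
  have hcau : ∀ t, 0 ≤ t → t ≤ T → CauchySeq (fun n => Z n t) := by
    intro t h0 h1
    rw [Metric.cauchySeq_iff']
    intro ε hε
    obtain ⟨N, hN⟩ := dyp_small hT hω hθ (show 0 < ε / (2 * C) by positivity)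
    refine ⟨N, fun n hn => ?_⟩
    obtain ⟨m, rfl⟩ := Nat.exists_eq_add_of_le hn
    rw [dist_eq_norm]
    have hb := sew_block (T := T) (H := hmax (dyp T (N+m) t) (dyp_mono hT _ t) (dyp_nonneg hT _ h0)
      (fun i => (dyp_le _ i).trans h1)) (2 ^ m) (2 ^ N)
    simp only [dyp_refine] at hb
    rw [← pow_add] at hb
    refine (hb.trans (mul_le_mul_of_nonneg_left (hN N le_rfl t h0 h1 _) hC.le)).trans_lt ?_
    have : C * (ε / (2 * C)) = ε / 2 := by field_simp
    rw [this]; linarith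
  have hlim : ∀ t, ∃ l, 0 ≤ t → t ≤ T → Filter.Tendsto (fun n => Z n t) Filter.atTop (nhds l) := by
    intro t
    by_cases h : 0 ≤ t ∧ t ≤ T
    · obtain ⟨l, hl⟩ := cauchySeq_tendsto_of_complete (hcau t h.1 h.2)
      exact ⟨l, fun _ _ => hl⟩
    · exact ⟨0, fun a b => absurd ⟨a, b⟩ h⟩
  choose z hz using hlim
  refine ⟨fun t => z t - z 0, sub_self _, C, hC, fun s t hs hst ht => ?_⟩
  have h1 : Filter.Tendsto (fun n => ‖Z n t - Z n s - Ξ s t‖) Filter.atTop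
      (nhds ‖z t - z s - Ξ s t‖) :=
    (((hz t (hs.trans hst) ht).sub (hz s hs (hst.trans ht))).sub_const _).norm
  rw [sub_sub_sub_cancel_right]
  refine le_of_forall_pos_le_add fun ε hε => ?_
  obtain ⟨N, hN⟩ := dyp_small hT hω hθ (show 0 < ε / K by positivity)
  refine le_of_tendsto h1 (Filter.eventually_atTop.mpr ⟨N, fun n hn => ?_⟩)
  set v : ℕ → ℝ := fun i => max s (dyp T n t i) with hv
  have hvm : Monotone v := fun i j hij => max_le_max_left _ (dyp_mono hT n t hij)
  have hv0 : v 0 = s := by simp [hv, dyp, hs, hs.trans hst]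
  have hvN : v (2 ^ n) = t := by
    have : ((2:ℝ) ^ n) * (T / 2 ^ n) = T := by field_simp
    simp [hv, dyp, this, ht, hst]
  have m1 := hmax v hvm (fun i => hs.trans (le_max_left _ _))
    (fun i => max_le (hst.trans ht) ((dyp_le n i).trans ht)) 0 (2 ^ n) (Nat.zero_le _)
  rw [hv0, hvN, ← Finset.range_eq_Ico] at m1
  have m2 : ‖Z n t - Z n s - ∑ i ∈ Finset.range (2 ^ n), Ξ (v i) (v (i+1))‖ ≤ ε := by
    rw [hZ]
    simp only
    rw [← Finset.sum_sub_distrib, ← Finset.sum_sub_distrib]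
    refine (norm_sum_le_of_le (f := _) _ (n := fun i => K * ω (dyp T n t i) (dyp T n t (i+1)) ^ θ)
      fun i _ => ?_).trans ?_
    · refine clip_est hω hθ hK hΞ (by positivity) ?_ hs hst ht
      push_cast
      have : 0 < T / 2 ^ n := by positivity
      linarith
    · rw [← Finset.mul_sum]
      refine (mul_le_mul_of_nonneg_left (hN n hn t (hs.trans hst) ht _) hK.le).trans ?_
      rw [mul_div_cancel₀ _ hK.ne']
  calc ‖Z n t - Z n s - Ξ s t‖ = ‖(∑ i ∈ Finset.range (2 ^ n), Ξ (v i) (v (i+1)) - Ξ s t) +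
        (Z n t - Z n s - ∑ i ∈ Finset.range (2 ^ n), Ξ (v i) (v (i+1)))‖ := by congr 1; abel
    _ ≤ _ := (norm_add_le _ _).trans (add_le_add m1 m2)

end Sewing

section TensorLemmas

variable {V : Type*} [NormedAddCommGroup V] [NormedSpace ℝ V]

lemma tapply_add {n m : ℕ} (B : Euc n → Euc m → V) (X Y : EuclideanSpace ℝ (Fin n × Fin m)) :
    tapply B (X + Y) = tapply B X + tapply B Y := by
  simp [tapply, add_smul, Finset.sum_add_distrib]

lemma tapply_sub_fun {n m : ℕ} (B B' : Euc n → Euc m → V)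
    (X : EuclideanSpace ℝ (Fin n × Fin m)) :
    tapply B X - tapply B' X = tapply (fun v w => B v w - B' v w) X := by
  simp [tapply, smul_sub, Finset.sum_sub_distrib]

lemma euc_sum {n : ℕ} (v : Euc n) : v = ∑ i, v i • (eb i : Euc n) := by
  ext j
  simp [eb, Pi.single_apply]

lemma tapply_tensor {n m : ℕ} {U : Type*} [NormedAddCommGroup U] [NormedSpace ℝ U]
    (a : Euc n →L[ℝ] U →L[ℝ] V) (b : Euc m →L[ℝ] U) (v : Euc n) (w : Euc m) :
    tapply (fun w' v' => a w' (b v')) (tensorE v w) = a v (b w) := by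
  conv_rhs => rw [euc_sum v, euc_sum w]
  simp only [map_sum, map_smul, ContinuousLinearMap.sum_apply, ContinuousLinearMap.smul_apply]
  simp only [tapply, Fintype.sum_prod_type, tensorE, Finset.smul_sum]
  rw [Finset.sum_comm]
  refine Finset.sum_congr rfl fun i _ => Finset.sum_congr rfl fun j _ => ?_
  simp only [smul_smul]
  rw [mul_comm (w.ofLp i)]
  rfl

lemma norm_eb {n : ℕ} (i : Fin n) : ‖(eb i : Euc n)‖ = 1 := by simp [eb]

lemma tapply_norm {n m : ℕ} (B : Euc n → Euc m → V) (X : EuclideanSpace ℝ (Fin n × Fin m))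
    {b : ℝ} (hb : 0 ≤ b) (hB : ∀ i j, ‖B (eb i) (eb j)‖ ≤ b) :
    ‖tapply B X‖ ≤ (n * m) * b * ‖X‖ := by
  unfold tapply
  refine (norm_sum_le_of_le _ (n := fun _ => ‖X‖ * b) fun q _ => ?_).trans ?_
  · rw [norm_smul]
    exact mul_le_mul (PiLp.norm_apply_le X q) (hB _ _) (norm_nonneg _) (norm_nonneg _)
  · simp only [Finset.sum_const, Finset.card_univ, Fintype.card_prod, Fintype.card_fin,
      nsmul_eq_mul]
    push_cast
    apply le_of_eq; ring

end TensorLemmas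

/-- **Integration of a controlled integrand against a controlled path.**
Given a `V`-valued controlled rough path `(y, y')` and an `L(V,Ṽ)`-valued controlled rough
path `(α, α')` (with `α'_s ∈ L(W ⊗ V, Ṽ)` in curried form), there is a continuous
`z : [0,T] → Ṽ` with `z 0 = 0` such that
`z_t − z_s − α_s (y_t − y_s) − α'_s ((I ⊗ y'_s) 𝕏_{s,t}) = O(ω(s,t)^{3/p})`; moreover,
with `z'_s := α_s ∘ y'_s`, the pair `(z, z')` is a `Ṽ`-valued rough path controlled by `X`. -/
theorem exists_rough_integral_controlled_integrand
    {T p : ℝ} (hT : 0 < T) (hp1 : 1 ≤ p) (hp3 : p < 3) {k : ℕ} (hk : 1 ≤ k)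
    {ω : ℝ → ℝ → ℝ} (hω : IsControl T ω)
    {x : ℝ → Euc k} {XX : ℝ → ℝ → EuclideanSpace ℝ (Fin k × Fin k)}
    (hX : IsRoughPath T p ω x XX)
    {V Vt : Type*} [NormedAddCommGroup V] [NormedSpace ℝ V] [CompleteSpace V]
    [NormedAddCommGroup Vt] [NormedSpace ℝ Vt] [CompleteSpace Vt]
    {y : ℝ → V} {y' : ℝ → Euc k →L[ℝ] V} (hy : IsCRP p ω x 0 T y y')
    {α : ℝ → V →L[ℝ] Vt} {α' : ℝ → Euc k →L[ℝ] V →L[ℝ] Vt}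
    (hα : IsCRP p ω x 0 T α α') :
    ∃ z : ℝ → Vt, ContinuousOn z (Set.Icc 0 T) ∧ z 0 = 0 ∧
      (∃ C : ℝ, 0 < C ∧ ∀ ⦃s t : ℝ⦄, 0 ≤ s → s ≤ t → t ≤ T →
        ‖z t - z s - α s (y t - y s) - tapply (fun w v => α' s w (y' s v)) (XX s t)‖
          ≤ C * ω s t ^ (3 / p)) ∧
      IsCRP p ω x 0 T z (fun s => (α s).comp (y' s)) := by
  have hp0 : 0 < p := by linarith
  obtain ⟨cy, cy', Cy, hCy⟩ := hy
  obtain ⟨ca, ca', Ca, hCa⟩ := hα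
  obtain ⟨M1, hM1⟩ := (isCompact_Icc (a := (0:ℝ)) (b := T)).exists_bound_of_continuousOn cy'
  obtain ⟨M2, hM2⟩ := (isCompact_Icc (a := (0:ℝ)) (b := T)).exists_bound_of_continuousOn ca
  obtain ⟨M3, hM3⟩ := (isCompact_Icc (a := (0:ℝ)) (b := T)).exists_bound_of_continuousOn ca'
  obtain ⟨M, hMpos, l1, l2, l3, l4, l5⟩ :
      ∃ M : ℝ, 0 < M ∧ M1 ≤ M ∧ M2 ≤ M ∧ M3 ≤ M ∧ Cy ≤ M ∧ Ca ≤ M := by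
    refine ⟨|M1| + |M2| + |M3| + |Cy| + |Ca| + 1, by positivity, ?_, ?_, ?_, ?_, ?_⟩ <;>
    linarith [le_abs_self M1, le_abs_self M2, le_abs_self M3, le_abs_self Cy, le_abs_self Ca,
      abs_nonneg M1, abs_nonneg M2, abs_nonneg M3, abs_nonneg Cy, abs_nonneg Ca]
  set h : ℝ → ℝ → ℝ := fun s t => ω s t ^ (1 / p) with hh
  have e2 : ∀ s t, 0 ≤ s → s ≤ t → t ≤ T → ω s t ^ (2 / p) = h s t ^ 2 := by
    intro s t a b c
    rw [hh]; simp only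
    rw [← Real.rpow_natCast, ← Real.rpow_mul (hω.nonneg a b c)]
    congr 1; push_cast; ring
  have e3 : ∀ s t, 0 ≤ s → s ≤ t → t ≤ T → ω s t ^ (3 / p) = h s t ^ 3 := by
    intro s t a b c
    rw [hh]; simp only
    rw [← Real.rpow_natCast, ← Real.rpow_mul (hω.nonneg a b c)]
    congr 1; push_cast; ring
  have hnn : ∀ s t, 0 ≤ s → s ≤ t → t ≤ T → 0 ≤ h s t := fun s t a b c =>
    Real.rpow_nonneg (hω.nonneg a b c) _
  have hmono : ∀ s s' t' t, 0 ≤ s → s ≤ s' → s' ≤ t' → t' ≤ t → t ≤ T → h s' t' ≤ h s t :=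
    fun s s' t' t a b c d e => Real.rpow_le_rpow (hω.nonneg (a.trans b) c (d.trans e))
      (ctrl_mono hω a b c d e) (by positivity)
  set H := h 0 T with hH
  have hH0 : 0 ≤ H := hnn 0 T le_rfl hT.le le_rfl
  have hHle : ∀ s t, 0 ≤ s → s ≤ t → t ≤ T → h s t ≤ H := fun s t a b c =>
    hmono 0 s t T le_rfl a b c le_rfl
  have bx : ∀ s t, 0 ≤ s → s ≤ t → t ≤ T → ‖x t - x s‖ ≤ h s t := fun s t a b c =>
    hX.bound_x a b c
  have bXX : ∀ s t, 0 ≤ s → s ≤ t → t ≤ T → ‖XX s t‖ ≤ h s t ^ 2 := fun s t a b c =>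
    (hX.bound_XX a b c).trans_eq (e2 s t a b c)
  have by1 : ∀ s t, 0 ≤ s → s ≤ t → t ≤ T → ‖y t - y s - y' s (x t - x s)‖ ≤ M * h s t ^ 2 := by
    intro s t a b c
    refine (hCy a b c).1.trans ?_
    rw [e2 s t a b c]
    exact mul_le_mul_of_nonneg_right l4 (sq_nonneg _)
  have by2 : ∀ s t, 0 ≤ s → s ≤ t → t ≤ T → ‖y' t - y' s‖ ≤ M * h s t := fun s t a b c =>
    (hCy a b c).2.trans (mul_le_mul_of_nonneg_right l4 (hnn s t a b c))
  have ba1 : ∀ s t, 0 ≤ s → s ≤ t → t ≤ T → ‖α t - α s - α' s (x t - x s)‖ ≤ M * h s t ^ 2 := by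
    intro s t a b c
    refine (hCa a b c).1.trans ?_
    rw [e2 s t a b c]
    exact mul_le_mul_of_nonneg_right l5 (sq_nonneg _)
  have ba2 : ∀ s t, 0 ≤ s → s ≤ t → t ≤ T → ‖α' t - α' s‖ ≤ M * h s t := fun s t a b c =>
    (hCa a b c).2.trans (mul_le_mul_of_nonneg_right l5 (hnn s t a b c))
  have ny' : ∀ s, 0 ≤ s → s ≤ T → ‖y' s‖ ≤ M := fun s a b => (hM1 s ⟨a, b⟩).trans l1
  have na : ∀ s, 0 ≤ s → s ≤ T → ‖α s‖ ≤ M := fun s a b => (hM2 s ⟨a, b⟩).trans l2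
  have na' : ∀ s, 0 ≤ s → s ≤ T → ‖α' s‖ ≤ M := fun s a b => (hM3 s ⟨a, b⟩).trans l3
  -- first-order bounds
  have dy : ∀ s t, 0 ≤ s → s ≤ t → t ≤ T → ‖y t - y s‖ ≤ M * (1 + H) * h s t := by
    intro s t a b c
    have i1 := by1 s t a b c
    have i2 : ‖y' s (x t - x s)‖ ≤ M * h s t :=
      (y' s).le_of_opNorm_le_of_le (ny' s a (b.trans c)) (bx s t a b c)
    have i3 : ‖y t - y s‖ ≤ ‖y t - y s - y' s (x t - x s)‖ + ‖y' s (x t - x s)‖ := by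
      have := norm_add_le (y t - y s - y' s (x t - x s)) (y' s (x t - x s))
      rwa [sub_add_cancel] at this
    have i4 : M * h s t ^ 2 ≤ M * (H * h s t) := by
      rw [sq]
      exact mul_le_mul_of_nonneg_left
        (mul_le_mul_of_nonneg_right (hHle s t a b c) (hnn s t a b c)) hMpos.le
    nlinarith
  have da : ∀ s t, 0 ≤ s → s ≤ t → t ≤ T → ‖α t - α s‖ ≤ M * (1 + H) * h s t := by
    intro s t a b c
    have i1 := ba1 s t a b c
    have i2 : ‖α' s (x t - x s)‖ ≤ M * h s t :=
      (α' s).le_of_opNorm_le_of_le (na' s a (b.trans c)) (bx s t a b c)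
    have i3 : ‖α t - α s‖ ≤ ‖α t - α s - α' s (x t - x s)‖ + ‖α' s (x t - x s)‖ := by
      have := norm_add_le (α t - α s - α' s (x t - x s)) (α' s (x t - x s))
      rwa [sub_add_cancel] at this
    have i4 : M * h s t ^ 2 ≤ M * (H * h s t) := by
      rw [sq]
      exact mul_le_mul_of_nonneg_left
        (mul_le_mul_of_nonneg_right (hHle s t a b c) (hnn s t a b c)) hMpos.le
    nlinarith
  set Ξ : ℝ → ℝ → Vt := fun s t =>
    α s (y t - y s) + tapply (fun w v => α' s w (y' s v)) (XX s t) with hΞdef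
  set K : ℝ := M * (M * (1 + H)) + M * (2 * M) + (k * k) * (2 * M * M) with hKdef
  have hK : 0 < K := by positivity
  have hΞ : ∀ s t u, 0 ≤ s → s ≤ t → t ≤ u → u ≤ T →
      ‖Ξ s u - Ξ s t - Ξ t u‖ ≤ K * ω s u ^ (3 / p) := by
    intro s t u hs hst htu hu
    have ht : 0 ≤ t := hs.trans hst
    have htT : t ≤ T := htu.trans hu
    have hsT : s ≤ T := hst.trans htT
    rw [e3 s u hs (hst.trans htu) hu]
    set r := h s u with hr
    have hr0 : 0 ≤ r := hnn s u hs (hst.trans htu) hu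
    have r1 : h s t ≤ r := hmono s s t u hs le_rfl hst htu hu
    have r2 : h t u ≤ r := hmono s t u u hs hst htu le_rfl hu
    have n1 := hnn s t hs hst htT
    have n2 := hnn t u ht htu hu
    have key : Ξ s u - Ξ s t - Ξ t u =
        -((α t - α s - α' s (x t - x s)) (y u - y t))
        - (α' s (x t - x s)) ((y u - y t - y' t (x u - x t)) + (y' t - y' s) (x u - x t))
        + tapply (fun w v => α' s w (y' s v) - α' t w (y' t v)) (XX t u) := by
      rw [← tapply_sub_fun]
      simp only [hΞdef]
      rw [hX.chen hs hst htu hu, tapply_add, tapply_add, tapply_tensor]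
      simp only [map_sub, map_add, ContinuousLinearMap.sub_apply]
      abel
    have t1 : ‖(α t - α s - α' s (x t - x s)) (y u - y t)‖ ≤ M * r ^ 2 * (M * (1 + H) * r) :=
      ContinuousLinearMap.le_of_opNorm_le_of_le _
        ((ba1 s t hs hst htT).trans (by gcongr)) ((dy t u ht htu hu).trans (by gcongr))
    have t2 : ‖(α' s (x t - x s)) ((y u - y t - y' t (x u - x t)) + (y' t - y' s) (x u - x t))‖
        ≤ (M * r) * (M * r ^ 2 + (M * r) * r) := by
      refine ContinuousLinearMap.le_of_opNorm_le_of_le _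
        ((α' s).le_of_opNorm_le_of_le (na' s hs hsT) ((bx s t hs hst htT).trans r1)) ?_
      refine (norm_add_le _ _).trans (add_le_add ((by1 t u ht htu hu).trans (by gcongr)) ?_)
      exact ContinuousLinearMap.le_of_opNorm_le_of_le _
        ((by2 s t hs hst htT).trans (by gcongr)) ((bx t u ht htu hu).trans r2)
    have t3 : ‖tapply (fun w v => α' s w (y' s v) - α' t w (y' t v)) (XX t u)‖
        ≤ (k * k) * (2 * M * M * r) * r ^ 2 := by
      refine (tapply_norm _ _ (b := 2 * M * M * r) (by positivity) fun i j => ?_).trans ?_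
      · have : α' s (eb i) (y' s (eb j)) - α' t (eb i) (y' t (eb j)) =
            -((α' t - α' s) (eb i) (y' s (eb j))) - α' t (eb i) ((y' t - y' s) (eb j)) := by
          simp only [map_sub, ContinuousLinearMap.sub_apply]
          abel
        simp only [this]
        refine (norm_sub_le _ _).trans ?_
        rw [norm_neg]
        have q1 : ‖(α' t - α' s) (eb i) (y' s (eb j))‖ ≤ (M * r * 1) * (M * 1) :=
          ContinuousLinearMap.le_of_opNorm_le_of_le _
            (ContinuousLinearMap.le_of_opNorm_le_of_le _
              ((ba2 s t hs hst htT).trans (by gcongr)) (norm_eb i).le)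
            (ContinuousLinearMap.le_of_opNorm_le_of_le _ (ny' s hs hsT) (norm_eb j).le)
        have q2 : ‖α' t (eb i) ((y' t - y' s) (eb j))‖ ≤ (M * 1) * (M * r * 1) :=
          ContinuousLinearMap.le_of_opNorm_le_of_le _
            (ContinuousLinearMap.le_of_opNorm_le_of_le _ (na' t ht htT) (norm_eb i).le)
            (ContinuousLinearMap.le_of_opNorm_le_of_le _
              ((by2 s t hs hst htT).trans (by gcongr)) (norm_eb j).le)
        linarith
      · gcongr
        exact (bXX t u ht htu hu).trans (by gcongr)
    rw [key]
    refine (norm_add_le _ _).trans ((add_le_add_left (norm_sub_le _ _) _).trans ?_)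
    rw [norm_neg]
    refine (add_le_add (add_le_add t1 t2) t3).trans (le_of_eq ?_)
    rw [hKdef]; ring
  obtain ⟨z, hz0, C, hC, hz⟩ := sewing hT hω
    (show 1 < 3 / p by rw [lt_div_iff₀ hp0]; linarith) hK hΞ
  -- second-order bound
  set D : ℝ := C * H + M * M + (k * k) * (M * M) with hD
  have hD0 : 0 ≤ D := by positivity
  have hz2 : ∀ s t, 0 ≤ s → s ≤ t → t ≤ T →
      ‖z t - z s - α s (y' s (x t - x s))‖ ≤ D * h s t ^ 2 := by
    intro s t a b c
    have i1 := hz s t a b c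
    rw [e3 s t a b c] at i1
    have n := hnn s t a b c
    have i1' : C * h s t ^ 3 ≤ C * H * h s t ^ 2 := by
      have : C * h s t ^ 3 = C * h s t * h s t ^ 2 := by ring
      rw [this]
      have := hHle s t a b c
      gcongr
    have i2 : ‖α s (y t - y s - y' s (x t - x s))‖ ≤ M * (M * h s t ^ 2) :=
      (α s).le_of_opNorm_le_of_le (na s a (b.trans c)) (by1 s t a b c)
    have i3 : ‖tapply (fun w v => α' s w (y' s v)) (XX s t)‖ ≤ (k * k) * (M * M) * h s t ^ 2 := by
      refine (tapply_norm _ _ (b := M * M) (by positivity) fun i j => ?_).trans ?_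
      · have : ‖α' s (eb i) (y' s (eb j))‖ ≤ (M * 1) * (M * 1) :=
          ContinuousLinearMap.le_of_opNorm_le_of_le _
            (ContinuousLinearMap.le_of_opNorm_le_of_le _ (na' s a (b.trans c)) (norm_eb i).le)
            (ContinuousLinearMap.le_of_opNorm_le_of_le _ (ny' s a (b.trans c)) (norm_eb j).le)
        simpa using this
      · have := bXX s t a b c
        gcongr
    have e : z t - z s - α s (y' s (x t - x s)) = (z t - z s - Ξ s t) +
        α s (y t - y s - y' s (x t - x s)) + tapply (fun w v => α' s w (y' s v)) (XX s t) := by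
      simp only [hΞdef, map_sub]; abel
    rw [e]
    refine (norm_add₃_le).trans ?_
    have : D * h s t ^ 2 = C * H * h s t ^ 2 + M * (M * h s t ^ 2) +
      (k * k) * (M * M) * h s t ^ 2 := by rw [hD]; ring
    linarith
  set D1 : ℝ := D * H + M * M with hD1
  have hD10 : 0 ≤ D1 := by positivity
  have hz1 : ∀ s t, 0 ≤ s → s ≤ t → t ≤ T → ‖z t - z s‖ ≤ D1 * h s t := by
    intro s t a b c
    have n := hnn s t a b c
    have i1 := hz2 s t a b c
    have i2 : ‖α s (y' s (x t - x s))‖ ≤ M * (M * h s t) :=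
      (α s).le_of_opNorm_le_of_le (na s a (b.trans c))
        ((y' s).le_of_opNorm_le_of_le (ny' s a (b.trans c)) (bx s t a b c))
    have i3 := norm_add_le (z t - z s - α s (y' s (x t - x s))) (α s (y' s (x t - x s)))
    rw [sub_add_cancel] at i3
    have i4 : D * h s t ^ 2 ≤ D * H * h s t := by
      rw [sq, ← mul_assoc]
      have := hHle s t a b c
      gcongr
    rw [hD1]
    linarith
  have hzc : ContinuousOn z (Set.Icc 0 T) := by
    rw [Metric.continuousOn_iff]
    intro b hb ε hε
    have hη : 0 < (ε / (D1 + 1)) ^ p := by positivity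
    obtain ⟨δ, hδ, hsm⟩ := ctrl_small hω hη
    have main : ∀ s t, 0 ≤ s → s ≤ t → t ≤ T → t - s < δ → ‖z t - z s‖ < ε := by
      intro s t a b c d
      have i1 : h s t ≤ ε / (D1 + 1) := by
        have := Real.rpow_le_rpow (hω.nonneg a b c) (hsm s t a b c d)
          (show 0 ≤ 1 / p by positivity)
        rwa [← Real.rpow_mul (by positivity), mul_one_div_cancel hp0.ne', Real.rpow_one] at this
      refine (hz1 s t a b c).trans_lt ?_
      calc D1 * h s t ≤ D1 * (ε / (D1 + 1)) := by gcongr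
        _ < (D1 + 1) * (ε / (D1 + 1)) := by
          have : 0 < ε / (D1 + 1) := by positivity
          linarith
        _ = ε := by field_simp
    refine ⟨δ, hδ, fun a ha hab => ?_⟩
    rw [Real.dist_eq, abs_lt] at hab
    rcases le_total a b with hle | hle
    · rw [dist_comm, dist_eq_norm]
      exact main a b ha.1 hle hb.2 (by linarith)
    · rw [dist_eq_norm]
      exact main b a hb.1 hle ha.2 (by linarith)
  refine ⟨z, hzc, hz0, ⟨C, hC, fun s t a b c => ?_⟩, hzc, ca.clm_comp cy', ?_⟩
  · have := hz s t a b c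
    rwa [hΞdef, ← sub_sub] at this
  · refine ⟨D + (M * M + M * (1 + H) * M), fun s t a b c => ⟨?_, ?_⟩⟩
    · rw [e2 s t a b c]
      refine (hz2 s t a b c).trans ?_
      exact mul_le_mul_of_nonneg_right (le_add_of_nonneg_right (by positivity)) (sq_nonneg _)
    · have n := hnn s t a b c
      have e : (α t).comp (y' t) - (α s).comp (y' s) =
          (α t).comp (y' t - y' s) + (α t - α s).comp (y' s) := by
        ext v; simp
      change ‖(α t).comp (y' t) - (α s).comp (y' s)‖ ≤ _ * h s t
      rw [e]
      refine (norm_add_le _ _).trans ?_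
      have q1 : ‖(α t).comp (y' t - y' s)‖ ≤ M * (M * h s t) :=
        (ContinuousLinearMap.opNorm_comp_le _ _).trans
          (mul_le_mul (na t (a.trans b) c) (by2 s t a b c) (norm_nonneg _) hMpos.le)
      have q2 : ‖(α t - α s).comp (y' s)‖ ≤ M * (1 + H) * h s t * M :=
        (ContinuousLinearMap.opNorm_comp_le _ _).trans
          (mul_le_mul (da s t a b c) (ny' s a (b.trans c)) (norm_nonneg _) (by positivity))
      have : 0 ≤ D * h s t := by positivity
      linarith
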